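/- Let G be a group and z ∈ ℓ¹(G×G). Then ⟨c, z⟩ = 0 for every bounded function c : G × G → ℝ satisfying the 2-cocycle identity c(h,k) − c(gh,k) + c(g,hk) − c(g,h) = 0 (for all g,h,k ∈ G) if and only if z belongs to the closure of the ℝ-linear span of B₂ in ℓ¹(G×G). -/

import Mathlib

noncomputable section

open scoped ENNReal

instance : Fact ((1 : ℝ≥0∞) ≤ 1) := ⟨le_rfl⟩

/-- Dirac element of `ℓ¹(G×G)`. -/
def dirac {G : Type*} [Group G] (x : G × G) : lp (fun _ : G × G => ℝ) 1 :=
  letI := Classical.decEq (G × G)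
  lp.single 1 x 1

/-- The set of boundary elements of `ℓ¹(G×G)`. -/
def B2 (G : Type*) [Group G] : Set (lp (fun _ : G × G => ℝ) 1) :=
  {x | ∃ a b k : G, x = dirac (b, k) - dirac (a * b, k) + dirac (a, b * k) - dirac (a, b)}

theorem lp_one_norm_eq_tsum {ι : Type*} (z : lp (fun _ : ι => ℝ) 1) : ‖z‖ = ∑' i, |z i| := by
  simpa using lp.norm_eq_tsum_rpow (by simp) z

theorem lp_one_summable_abs {ι : Type*} (z : lp (fun _ : ι => ℝ) 1) :
    Summable fun i => |z i| := by
  simpa using (lp.memℓp z).summable (by simp)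

theorem lp_one_summable_abs_mul {ι : Type*} {f : ι → ℝ} {C : ℝ} (hf : ∀ i, |f i| ≤ C)
    (z : lp (fun _ : ι => ℝ) 1) : Summable fun i => |z i * f i| := by
  refine .of_nonneg_of_le (fun i => abs_nonneg _) (fun i => ?_)
    ((lp_one_summable_abs z).mul_right C)
  rw [abs_mul]
  exact mul_le_mul_of_nonneg_left (hf i) (abs_nonneg _)

/-- The continuous linear functional on `ℓ¹` given by pairing with a bounded function. -/
def boundedPairing {ι : Type*} (f : ι → ℝ) (C : ℝ) (hf : ∀ i, |f i| ≤ C) :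
    StrongDual ℝ (lp (fun _ : ι => ℝ) 1) :=
  LinearMap.mkContinuous
    { toFun := fun z => ∑' i, z i * f i
      map_add' := fun x y => by
        simp only [lp.coeFn_add, Pi.add_apply, add_mul]
        exact (lp_one_summable_abs_mul hf x).of_abs.tsum_add (lp_one_summable_abs_mul hf y).of_abs
      map_smul' := fun r x => by
        simp only [lp.coeFn_smul, Pi.smul_apply, smul_eq_mul, mul_assoc, tsum_mul_left,
          RingHom.id_apply] }
    C fun z => by
      have hs := lp_one_summable_abs_mul hf z
      calc ‖∑' i, z i * f i‖ ≤ ∑' i, ‖z i * f i‖ := norm_tsum_le_tsum_norm hs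
        _ ≤ ∑' i, C * |z i| := by
          refine hs.tsum_le_tsum (fun i => ?_) ((lp_one_summable_abs z).mul_left C)
          rw [Real.norm_eq_abs, abs_mul, mul_comm]
          exact mul_le_mul_of_nonneg_right (hf i) (abs_nonneg _)
        _ = C * ‖z‖ := by rw [tsum_mul_left, lp_one_norm_eq_tsum]

theorem boundedPairing_apply {ι : Type*} {f : ι → ℝ} {C : ℝ} (hf : ∀ i, |f i| ≤ C)
    (z : lp (fun _ : ι => ℝ) 1) : boundedPairing f C hf z = ∑' i, z i * f i :=
  rfl

theorem boundedPairing_dirac {G : Type*} [Group G] {f : G × G → ℝ} {C : ℝ}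
    (hf : ∀ i, |f i| ≤ C) (x : G × G) : boundedPairing f C hf (dirac x) = f x := by
  classical
  rw [boundedPairing_apply, tsum_eq_single x]
  · simp [dirac]
  · intro y hy
    simp [dirac, hy]

theorem norm_dirac {G : Type*} [Group G] (x : G × G) : ‖dirac x‖ = 1 := by
  simp [dirac, lp.norm_single]

theorem StrongDual.apply_eq_tsum_dirac {G : Type*} [Group G]
    (f : StrongDual ℝ (lp (fun _ : G × G => ℝ) 1)) (z : lp (fun _ : G × G => ℝ) 1) :
    f z = ∑' x, z x * f (dirac x) := by
  let := Classical.decEq (G × G)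
  have h := (lp.hasSum_single ENNReal.one_ne_top z).mapL f
  rw [← h.tsum_eq]
  refine tsum_congr fun x => ?_
  rw [← smul_eq_mul, ← map_smul, dirac, ← lp.single_smul, smul_eq_mul, mul_one]

/-- A point lies in the closure of a subspace if every continuous functional vanishing on the
subspace vanishes at the point. -/
theorem Submodule.mem_closure_of_forall_dual {E : Type*} [NormedAddCommGroup E]
    [NormedSpace ℝ E] {p : Submodule ℝ E} {z : E}
    (h : ∀ f : StrongDual ℝ E, (∀ x ∈ p, f x = 0) → f z = 0) : z ∈ closure (p : Set E) := by
  by_contra hz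
  obtain ⟨f, u, hu, huz⟩ :=
    geometric_hahn_banach_closed_point p.convex.closure isClosed_closure hz
  have hu' : ∀ x ∈ p, f x < u := fun x hx => hu x (subset_closure hx)
  have hu0 : 0 < u := by simpa using hu' 0 p.zero_mem
  refine (hu0.trans huz).ne' (h f fun x hx => ?_)
  by_contra hfx
  have := hu' ((u / f x) • x) (p.smul_mem _ hx)
  rw [map_smul, smul_eq_mul, div_mul_cancel₀ _ hfx] at this
  exact this.false

/-- Hahn–Banach separation for ℓ¹-chains: `z ∈ ℓ¹(G×G)` pairs to zero with
every bounded function satisfying the 2-cocycle identity iff `z` lies in the closure of the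
span of the boundaries `B₂`. -/
theorem stmt_12 {G : Type*} [Group G] (z : lp (fun _ : G × G => ℝ) 1) :
    (∀ c : G → G → ℝ,
      (∃ k : ℝ, ∀ g h : G, |c g h| ≤ k) →
      (∀ g h k : G, c h k - c (g * h) k + c g (h * k) - c g h = 0) →
      ∑' uv : G × G, z uv * c uv.1 uv.2 = 0) ↔
    z ∈ closure ((Submodule.span ℝ (B2 G) : Submodule ℝ _) :
        Set (lp (fun _ : G × G => ℝ) 1)) := by
  constructor
  · intro h
    refine Submodule.mem_closure_of_forall_dual fun f hf => ?_
    rw [f.apply_eq_tsum_dirac]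
    refine h (fun g k => f (dirac (g, k))) ⟨‖f‖, fun g k => ?_⟩ fun g k l => ?_
    · simpa [norm_dirac] using f.le_opNorm (dirac (g, k))
    · simpa only [map_add, map_sub] using hf _ (Submodule.subset_span ⟨g, k, l, rfl⟩)
  · rintro hz c ⟨C, hC⟩ hc
    set φ := boundedPairing (fun x : G × G => c x.1 x.2) C fun x => hC x.1 x.2 with hφ
    have hspan : Submodule.span ℝ (B2 G) ≤ φ.ker := by
      refine Submodule.span_le.2 ?_
      rintro _ ⟨a, b, k, rfl⟩
      simpa [hφ, boundedPairing_dirac] using hc a b k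
    exact closure_minimal hspan φ.isClosed_ker hz
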